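/- Let φ(λ) = λ/log(1 + √λ) and let u : (0,∞) → (0,∞) be a decreasing function with ∫_0^∞ e^{−λt} u(t) dt = 1/φ(λ) = log(1+√λ)/λ for all λ > 0. For an integer d ≥ 3, define g(r) = ∫_0^∞ (4πt)^{−d/2} e^{−r²/(4t)} u(t) dt. Then g(r) ≍ r^{2−d} log(1/r) as r → 0+. -/

import Mathlib

open MeasureTheory Set Filter Topology

/-!
The Green function is `r ^ (2 - d)` times the integral of `u (r ^ 2 * s)` against the fixed weight
`p s = (4 π s) ^ (-d / 2) * exp (-1 / (4 s))`. If `u` is decreasing and comparable to `log (1 / t)`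
at `0`, then `u (r ^ 2 * s)` is at most a constant times `log (1 / r) * (1 + 1 / s)`, which `p`
integrates because `d > 2`, while on `s ≤ 1` it is at least `u (r ^ 2)`, of order `log (1 / r)`.

The behaviour of `u` at `0` is read off its Laplace transform `L`. Cutting `L` at `t` gives, for
every `K > 0`, both `u t ≤ e * (L (1 / t) / t)` and
`L (1 / (K t)) / (K t) ≤ (e / K) * (L (1 / t) / t) + u t`. When `l * L l` is comparable to `log l`,
replacing `l` by `l / K` does not change its size, so a large `K` leaves `u t` with a fixed
proportion of the logarithm.
-/

open Asymptotics
open Real (exp log)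
open scoped Real

/-! ### A Tauberian theorem for decreasing functions -/

/-- The Laplace transform of a function on the half-line; it is `0` where the defining integral
diverges. -/
noncomputable def laplaceTransform (u : ℝ → ℝ) (l : ℝ) : ℝ :=
  ∫ t in Ioi (0 : ℝ), exp (-(l * t)) * u t

lemma laplaceTransform_nonneg {u : ℝ → ℝ} (hu₀ : ∀ t, 0 < t → 0 ≤ u t) (l : ℝ) :
    0 ≤ laplaceTransform u l :=
  setIntegral_nonneg measurableSet_Ioi fun t ht => mul_nonneg (Real.exp_pos _).le (hu₀ t ht)

lemma integrableOn_Ioc_of_integrableOn_exp_neg_mul {u : ℝ → ℝ} {l : ℝ}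
    (hint : IntegrableOn (fun t => exp (-(l * t)) * u t) (Ioi 0)) (T : ℝ) :
    IntegrableOn u (Ioc 0 T) := by
  have hexp : ContinuousOn (fun t => exp (l * t)) (Icc 0 T) := by fun_prop
  refine ((hint.mono_set Ioc_subset_Ioi_self).continuousOn_mul_of_subset hexp isCompact_Icc
    measurableSet_Ioc Ioc_subset_Icc_self).congr_fun (fun t _ => ?_) measurableSet_Ioc
  simp only [← mul_assoc, ← Real.exp_add, add_neg_cancel, Real.exp_zero, one_mul]

lemma setIntegral_Ioc_le_exp_mul_laplaceTransform {u : ℝ → ℝ} (hu₀ : ∀ t, 0 < t → 0 ≤ u t)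
    {l : ℝ} (hl : 0 ≤ l) (hint : IntegrableOn (fun t => exp (-(l * t)) * u t) (Ioi 0)) (T : ℝ) :
    ∫ t in Ioc 0 T, u t ≤ exp (l * T) * laplaceTransform u l := by
  calc ∫ t in Ioc 0 T, u t
      ≤ ∫ t in Ioc 0 T, exp (l * T) * (exp (-(l * t)) * u t) := by
        refine setIntegral_mono_on (integrableOn_Ioc_of_integrableOn_exp_neg_mul hint T)
          ((hint.mono_set Ioc_subset_Ioi_self).const_mul _) measurableSet_Ioc fun t ht => ?_
        rw [← mul_assoc, ← Real.exp_add]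
        refine le_mul_of_one_le_left (hu₀ t ht.1) (Real.one_le_exp ?_)
        linarith [mul_le_mul_of_nonneg_left ht.2 hl]
    _ = exp (l * T) * ∫ t in Ioc 0 T, exp (-(l * t)) * u t := integral_const_mul _ _
    _ ≤ exp (l * T) * laplaceTransform u l := by
        refine mul_le_mul_of_nonneg_left ?_ (Real.exp_pos _).le
        refine setIntegral_mono_set hint ?_ Ioc_subset_Ioi_self.eventuallyLE
        exact ae_restrict_of_forall_mem measurableSet_Ioi fun t ht =>
          mul_nonneg (Real.exp_pos _).le (hu₀ t ht)

lemma mul_le_setIntegral_Ioc_of_antitoneOn {u : ℝ → ℝ} (hu : AntitoneOn u (Ioi 0)) {T : ℝ}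
    (hT : 0 < T) (hint : IntegrableOn u (Ioc 0 T)) : T * u T ≤ ∫ t in Ioc 0 T, u t := by
  simpa [hT.le] using setIntegral_ge_of_const_le (c := u T) measurableSet_Ioc (by simp)
    (fun t ht => hu ht.1 hT ht.2) hint

lemma laplaceTransform_le_setIntegral_Ioc_add {u : ℝ → ℝ} (hu₀ : ∀ t, 0 < t → 0 ≤ u t)
    (hu : AntitoneOn u (Ioi 0)) {l : ℝ} (hl : 0 < l)
    (hint : IntegrableOn (fun t => exp (-(l * t)) * u t) (Ioi 0)) {T : ℝ} (hT : 0 < T) :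
    laplaceTransform u l ≤ (∫ t in Ioc 0 T, u t) + u T / l := by
  have hhead := hint.mono_set (Ioc_subset_Ioi_self : Ioc 0 T ⊆ Ioi 0)
  have htail := hint.mono_set (Ioi_subset_Ioi hT.le)
  have hexp : IntegrableOn (fun t => exp (-l * t)) (Ioi T) :=
    integrableOn_exp_mul_Ioi (neg_lt_zero.2 hl) T
  rw [laplaceTransform, ← Ioc_union_Ioi_eq_Ioi hT.le,
    setIntegral_union (Ioc_disjoint_Ioi le_rfl) measurableSet_Ioi hhead htail]
  refine add_le_add ?_ ?_
  · refine setIntegral_mono_on hhead (integrableOn_Ioc_of_integrableOn_exp_neg_mul hint T)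
      measurableSet_Ioc fun t ht => mul_le_of_le_one_left (hu₀ t ht.1) ?_
    exact Real.exp_le_one_iff.2 (neg_nonpos.2 (mul_nonneg hl.le ht.1.le))
  · calc ∫ t in Ioi T, exp (-(l * t)) * u t
        ≤ ∫ t in Ioi T, exp (-l * t) * u T := by
          refine setIntegral_mono_on htail (hexp.mul_const _) measurableSet_Ioi fun t ht => ?_
          rw [neg_mul]
          exact mul_le_mul_of_nonneg_left (hu hT (hT.trans ht) (le_of_lt ht)) (Real.exp_pos _).le
      _ = exp (-l * T) * (u T / l) := by
          rw [integral_mul_const, integral_exp_mul_Ioi (neg_lt_zero.2 hl), neg_div_neg_eq,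
            div_mul_eq_mul_div, mul_div_assoc]
      _ ≤ u T / l := by
          refine mul_le_of_le_one_left (div_nonneg (hu₀ T hT) hl.le) (Real.exp_le_one_iff.2 ?_)
          linarith [mul_pos hl hT]

lemma apply_inv_le_exp_one_mul_laplaceTransform {u : ℝ → ℝ} (hu₀ : ∀ t, 0 < t → 0 ≤ u t)
    (hu : AntitoneOn u (Ioi 0)) {x : ℝ} (hx : 0 < x)
    (hint : IntegrableOn (fun t => exp (-(x * t)) * u t) (Ioi 0)) :
    u x⁻¹ ≤ exp 1 * (x * laplaceTransform u x) := by
  have h := (mul_le_setIntegral_Ioc_of_antitoneOn hu (inv_pos.2 hx)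
    (integrableOn_Ioc_of_integrableOn_exp_neg_mul hint _)).trans
    (setIntegral_Ioc_le_exp_mul_laplaceTransform hu₀ hx.le hint _)
  rw [mul_inv_cancel₀ hx.ne', inv_mul_le_iff₀ hx] at h
  linarith

lemma div_mul_laplaceTransform_div_le {u : ℝ → ℝ} (hu₀ : ∀ t, 0 < t → 0 ≤ u t)
    (hu : AntitoneOn u (Ioi 0)) {x K : ℝ} (hx : 0 < x) (hK : 0 < K)
    (hint : IntegrableOn (fun t => exp (-(x * t)) * u t) (Ioi 0))
    (hintK : IntegrableOn (fun t => exp (-(x / K * t)) * u t) (Ioi 0)) :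
    x / K * laplaceTransform u (x / K) ≤ exp 1 / K * (x * laplaceTransform u x) + u x⁻¹ := by
  have hhead := setIntegral_Ioc_le_exp_mul_laplaceTransform hu₀ hx.le hint x⁻¹
  rw [mul_inv_cancel₀ hx.ne'] at hhead
  have hcut := laplaceTransform_le_setIntegral_Ioc_add hu₀ hu (div_pos hx hK) hintK (inv_pos.2 hx)
  calc x / K * laplaceTransform u (x / K)
      ≤ x / K * (exp 1 * laplaceTransform u x + u x⁻¹ / (x / K)) := by gcongr; linarith
    _ = exp 1 / K * (x * laplaceTransform u x) + u x⁻¹ := by field_simp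

lemma eventually_integrableOn_of_isTheta_log {u : ℝ → ℝ}
    (hL : (fun l => l * laplaceTransform u l) =Θ[atTop] log) :
    ∀ᶠ l in atTop, IntegrableOn (fun t => exp (-(l * t)) * u t) (Ioi 0) := by
  filter_upwards [hL.eq_zero_iff, eventually_gt_atTop 1] with l hzero hl
  have hne : l * laplaceTransform u l ≠ 0 := mt hzero.1 (Real.log_pos hl).ne'
  exact Integrable.of_integral_ne_zero (right_ne_zero_of_mul hne)

lemma isBigO_log_comp_inv_of_isTheta_laplaceTransform {u : ℝ → ℝ} (hu₀ : ∀ t, 0 < t → 0 ≤ u t)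
    (hu : AntitoneOn u (Ioi 0)) (hL : (fun l => l * laplaceTransform u l) =Θ[atTop] log) :
    (fun x => u x⁻¹) =O[atTop] log := by
  refine IsBigO.trans (IsBigO.of_bound (exp 1) ?_) hL.1
  filter_upwards [eventually_integrableOn_of_isTheta_log hL, eventually_gt_atTop 0] with x hint hx
  rw [Real.norm_of_nonneg (hu₀ _ (inv_pos.2 hx)),
    Real.norm_of_nonneg (mul_nonneg hx.le (laplaceTransform_nonneg hu₀ x))]
  exact apply_inv_le_exp_one_mul_laplaceTransform hu₀ hu hx hint

lemma log_isBigO_comp_inv_of_isTheta_laplaceTransform {u : ℝ → ℝ} (hu₀ : ∀ t, 0 < t → 0 ≤ u t)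
    (hu : AntitoneOn u (Ioi 0)) (hL : (fun l => l * laplaceTransform u l) =Θ[atTop] log) :
    log =O[atTop] fun x => u x⁻¹ := by
  obtain ⟨a, ha, hlow⟩ := hL.2.exists_pos
  obtain ⟨b, hb, hup⟩ := hL.1.exists_pos
  -- `K` is chosen so that the term `exp 1 / K * (x * L x)` eats at most half of `log x / a`.
  set K := 2 * a * b * exp 1 with hKdef
  have hK : 0 < K := by positivity
  have hdil : Tendsto (fun x : ℝ => x / K) atTop atTop := tendsto_id.atTop_div_const hK
  have hint := eventually_integrableOn_of_isTheta_log hL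
  refine IsBigO.of_bound (4 * a) ?_
  filter_upwards [hdil.eventually hlow.bound, hup.bound, hint, hdil.eventually hint,
    Real.tendsto_log_atTop.eventually_ge_atTop (4 * log K), eventually_gt_atTop 1]
    with x hlowK hup hint hintK hlogK hx1
  have hx : 0 < x := one_pos.trans hx1
  have hM : ∀ y, 0 < y → ‖y * laplaceTransform u y‖ = y * laplaceTransform u y := fun y hy =>
    Real.norm_of_nonneg (mul_nonneg hy.le (laplaceTransform_nonneg hu₀ y))
  rw [hM _ (div_pos hx hK), Real.log_div hx.ne' hK.ne'] at hlowK
  rw [hM _ hx, Real.norm_of_nonneg (Real.log_pos hx1).le] at hup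
  rw [Real.norm_of_nonneg (Real.log_pos hx1).le, Real.norm_of_nonneg (hu₀ _ (inv_pos.2 hx))]
  have hmain : log x - log K ≤ log x / 2 + a * u x⁻¹ := by
    calc log x - log K
        ≤ a * (x / K * laplaceTransform u (x / K)) := (Real.le_norm_self _).trans hlowK
      _ ≤ a * (exp 1 / K * (b * log x) + u x⁻¹) := by
          gcongr
          refine (div_mul_laplaceTransform_div_le hu₀ hu hx hK hint hintK).trans ?_
          gcongr
      _ = log x / 2 + a * u x⁻¹ := by rw [hKdef]; field_simp
  linarith

theorem isTheta_log_of_isTheta_laplaceTransform {u : ℝ → ℝ} (hu₀ : ∀ t, 0 < t → 0 ≤ u t)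
    (hu : AntitoneOn u (Ioi 0)) (hL : (fun l => l * laplaceTransform u l) =Θ[atTop] log) :
    u =Θ[𝓝[>] 0] log := by
  have hupper := (isBigO_log_comp_inv_of_isTheta_laplaceTransform hu₀ hu hL).comp_tendsto
    tendsto_inv_nhdsGT_zero
  have hlower := (log_isBigO_comp_inv_of_isTheta_laplaceTransform hu₀ hu hL).comp_tendsto
    tendsto_inv_nhdsGT_zero
  simpa only [IsTheta, Function.comp_def, inv_inv, Real.log_inv, isBigO_neg_left,
    isBigO_neg_right] using And.intro hupper hlower

/-! ### Green functions of subordinate Brownian motions -/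

/-- The Gaussian transition density of Brownian motion (with generator the Laplacian) at time `t`
and distance `r`; the dimension `d` may be any real number. -/
noncomputable def heatKernel (d r t : ℝ) : ℝ :=
  (4 * π * t) ^ (-d / 2) * exp (-(r ^ 2 / (4 * t)))

/-- The radial profile of the Green function of the Brownian motion in dimension `d` subordinated
by a subordinator with potential density `u`. -/
noncomputable def greenProfile (d : ℝ) (u : ℝ → ℝ) (r : ℝ) : ℝ :=
  ∫ t in Ioi (0 : ℝ), heatKernel d r t * u t

lemma heatKernel_pos (d r : ℝ) {t : ℝ} (ht : 0 < t) : 0 < heatKernel d r t := by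
  unfold heatKernel
  positivity

lemma measurable_heatKernel (d r : ℝ) : Measurable (heatKernel d r) := by
  unfold heatKernel
  fun_prop

lemma heatKernel_sq_mul (d : ℝ) {r s : ℝ} (hr : 0 < r) (hs : 0 < s) :
    heatKernel d r (r ^ 2 * s) = r ^ (-d) * heatKernel d 1 s := by
  have hpow : (4 * π * (r ^ 2 * s)) ^ (-d / 2) = r ^ (-d) * (4 * π * s) ^ (-d / 2) := by
    rw [mul_left_comm, Real.mul_rpow (by positivity) (by positivity), ← Real.rpow_natCast r 2,
      ← Real.rpow_mul hr.le]
    congr 2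
    push_cast
    ring
  have harg : r ^ 2 / (4 * (r ^ 2 * s)) = 1 ^ 2 / (4 * s) := by field_simp
  rw [heatKernel, heatKernel, hpow, harg, mul_assoc]

lemma greenProfile_eq_rpow_mul (d : ℝ) (u : ℝ → ℝ) {r : ℝ} (hr : 0 < r) :
    greenProfile d u r =
      r ^ (2 - d) * ∫ s in Ioi (0 : ℝ), heatKernel d 1 s * u (r ^ 2 * s) := by
  have hscale := integral_comp_mul_left_Ioi (fun t => heatKernel d r t * u t) 0 (pow_pos hr 2)
  rw [mul_zero, eq_inv_smul_iff₀ (pow_pos hr 2).ne', smul_eq_mul] at hscale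
  have hrpow : r ^ (2 - d) = r ^ 2 * r ^ (-d) := by
    rw [sub_eq_add_neg, Real.rpow_add hr, Real.rpow_two]
  have hkernel : EqOn (fun s => heatKernel d r (r ^ 2 * s) * u (r ^ 2 * s))
      (fun s => r ^ (-d) * (heatKernel d 1 s * u (r ^ 2 * s))) (Ioi 0) := fun s hs => by
    simp only [heatKernel_sq_mul d hr hs, mul_assoc]
  rw [greenProfile, ← hscale, setIntegral_congr_fun measurableSet_Ioi hkernel,
    integral_const_mul, hrpow, mul_assoc]

lemma integrableOn_rpow_neg_mul_exp_neg_div {a b : ℝ} (ha : 1 < a) (hb : 0 < b) :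
    IntegrableOn (fun t : ℝ => t ^ (-a) * exp (-(b / t))) (Ioi 0) := by
  have hgamma : IntegrableOn (fun y : ℝ => y ^ (a - 2) * exp (-(b * y))) (Ioi 0) := by
    simpa using integrableOn_rpow_mul_exp_neg_mul_rpow (s := a - 2) (p := 1) (by linarith)
      one_pos hb
  have hinv := (integrableOn_Ioi_comp_rpow_iff _ (p := -1) (by norm_num)).2 hgamma
  refine hinv.congr_fun (fun t (ht : 0 < t) => ?_) measurableSet_Ioi
  simp only [smul_eq_mul, abs_neg, abs_one, one_mul]
  rw [← Real.rpow_mul ht.le, ← mul_assoc, ← Real.rpow_add ht, Real.rpow_neg_one, div_eq_mul_inv]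
  congr 2
  ring

lemma integrableOn_heatKernel_mul_one_add_inv {d : ℝ} (hd : 2 < d) :
    IntegrableOn (fun s => heatKernel d 1 s * (1 + s⁻¹)) (Ioi 0) := by
  have hlow := integrableOn_rpow_neg_mul_exp_neg_div (a := d / 2) (b := 1 / 4) (by linarith)
    (by norm_num)
  have hhigh := integrableOn_rpow_neg_mul_exp_neg_div (a := d / 2 + 1) (b := 1 / 4) (by linarith)
    (by norm_num)
  refine IntegrableOn.congr_fun ((hlow.add hhigh).const_mul ((4 * π) ^ (-d / 2)))
    (fun s (hs : 0 < s) => ?_) measurableSet_Ioi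
  have hpow : s ^ (-(d / 2 + 1)) = s ^ (-(d / 2)) * s⁻¹ := by
    rw [neg_add, Real.rpow_add hs, Real.rpow_neg_one]
  have harg : 1 ^ 2 / (4 * s) = 1 / 4 / s := by field_simp
  simp only [Pi.add_apply]
  rw [heatKernel, Real.mul_rpow (by positivity) hs.le, hpow, harg, neg_div]
  ring

lemma exists_forall_le_mul_one_add_posLog_inv {u : ℝ → ℝ} (hu : AntitoneOn u (Ioi 0))
    (hO : u =O[𝓝[>] 0] log) :
    ∃ C, 0 ≤ C ∧ ∀ t, 0 < t → u t ≤ C * (1 + log⁺ t⁻¹) := by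
  obtain ⟨b, hb, hbound⟩ := hO.exists_pos
  obtain ⟨δ, hδ, hnear⟩ := mem_nhdsGT_iff_exists_Ioo_subset.1
    (inter_mem hbound.bound (Ioo_mem_nhdsGT one_pos))
  have hδ₂ : δ / 2 ∈ Ioo 0 δ := ⟨half_pos hδ, half_lt_self hδ⟩
  refine ⟨max b |u (δ / 2)|, by positivity, fun t ht => ?_⟩
  have hpos : 0 ≤ log⁺ t⁻¹ := Real.posLog_nonneg
  rcases lt_or_ge t δ with htδ | htδ
  · obtain ⟨hut, -, ht1⟩ := hnear ⟨ht, htδ⟩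
    have hlog : ‖log t‖ = log⁺ t⁻¹ := by
      rw [Real.posLog_apply, Real.log_inv, Real.norm_of_nonpos (Real.log_nonpos ht.le ht1.le),
        max_eq_right (neg_nonneg.2 (Real.log_nonpos ht.le ht1.le))]
    calc u t ≤ b * ‖log t‖ := (Real.le_norm_self _).trans hut
      _ ≤ max b |u (δ / 2)| * (1 + log⁺ t⁻¹) := by
        rw [hlog]
        gcongr
        · exact le_max_left _ _
        · linarith
  · calc u t ≤ u (δ / 2) := hu hδ₂.1 ht (hδ₂.2.le.trans htδ)
      _ ≤ max b |u (δ / 2)| * 1 := by rw [mul_one]; exact (le_abs_self _).trans (le_max_right _ _)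
      _ ≤ max b |u (δ / 2)| * (1 + log⁺ t⁻¹) := by gcongr; linarith

lemma heatKernel_mul_comp_mul_le (d : ℝ) {u : ℝ → ℝ} {C : ℝ} (hC : 0 ≤ C)
    (huC : ∀ t, 0 < t → u t ≤ C * (1 + log⁺ t⁻¹)) {c s : ℝ} (hc : 0 < c) (hs : 0 < s) :
    heatKernel d 1 s * u (c * s) ≤
      C * (1 + log⁺ c⁻¹) * (heatKernel d 1 s * (1 + s⁻¹)) := by
  have hpc : 0 ≤ log⁺ c⁻¹ := Real.posLog_nonneg
  have hps : log⁺ s⁻¹ ≤ s⁻¹ := by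
    rw [Real.posLog_apply]
    exact max_le (inv_pos.2 hs).le (Real.log_le_self (inv_pos.2 hs).le)
  have hlog : 1 + log⁺ (c * s)⁻¹ ≤ (1 + log⁺ c⁻¹) * (1 + s⁻¹) := by
    have hmul : log⁺ (c * s)⁻¹ ≤ log⁺ c⁻¹ + log⁺ s⁻¹ := by
      rw [mul_inv]
      exact Real.posLog_mul
    linarith [mul_nonneg hpc (inv_pos.2 hs).le]
  calc heatKernel d 1 s * u (c * s)
      ≤ heatKernel d 1 s * (C * ((1 + log⁺ c⁻¹) * (1 + s⁻¹))) := by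
        refine mul_le_mul_of_nonneg_left ((huC _ (mul_pos hc hs)).trans ?_)
          (heatKernel_pos d 1 hs).le
        exact mul_le_mul_of_nonneg_left hlog hC
    _ = C * (1 + log⁺ c⁻¹) * (heatKernel d 1 s * (1 + s⁻¹)) := by ring

lemma integrableOn_heatKernel_mul_comp_mul {d : ℝ} (hd : 2 < d) {u : ℝ → ℝ}
    (hu₀ : ∀ t, 0 < t → 0 ≤ u t) (hu : AntitoneOn u (Ioi 0)) {C : ℝ} (hC : 0 ≤ C)
    (huC : ∀ t, 0 < t → u t ≤ C * (1 + log⁺ t⁻¹)) {c : ℝ} (hc : 0 < c) :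
    IntegrableOn (fun s => heatKernel d 1 s * u (c * s)) (Ioi 0) := by
  have hanti : AntitoneOn (fun s => u (c * s)) (Ioi 0) := fun s hs t ht hst =>
    hu (mul_pos hc hs) (mul_pos hc ht) (mul_le_mul_of_nonneg_left hst hc.le)
  refine ((integrableOn_heatKernel_mul_one_add_inv hd).const_mul (C * (1 + log⁺ c⁻¹))).mono'
    ((measurable_heatKernel d 1).aemeasurable.mul
      (aemeasurable_restrict_of_antitoneOn measurableSet_Ioi hanti)).aestronglyMeasurable
    (ae_restrict_of_forall_mem measurableSet_Ioi fun s (hs : 0 < s) => ?_)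
  rw [Real.norm_of_nonneg (mul_nonneg (heatKernel_pos d 1 hs).le (hu₀ _ (mul_pos hc hs)))]
  exact heatKernel_mul_comp_mul_le d hC huC hc hs

lemma integral_heatKernel_mul_comp_sq_mul_isBigO_log {d : ℝ} (hd : 2 < d) {u : ℝ → ℝ}
    (hu₀ : ∀ t, 0 < t → 0 ≤ u t) (hu : AntitoneOn u (Ioi 0)) (hO : u =O[𝓝[>] 0] log) :
    (fun r => ∫ s in Ioi (0 : ℝ), heatKernel d 1 s * u (r ^ 2 * s)) =O[𝓝[>] 0] log := by
  obtain ⟨C, hC, huC⟩ := exists_forall_le_mul_one_add_posLog_inv hu hO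
  set N := ∫ s in Ioi (0 : ℝ), heatKernel d 1 s * (1 + s⁻¹)
  have hN : 0 ≤ N := setIntegral_nonneg measurableSet_Ioi fun s (hs : 0 < s) =>
    mul_nonneg (heatKernel_pos d 1 hs).le (by positivity)
  refine IsBigO.of_bound (C * 3 * N) ?_
  filter_upwards [self_mem_nhdsWithin, Real.tendsto_log_nhdsGT_zero.eventually_le_atBot (-1)]
    with r (hr : 0 < r) hlog
  have hposLog : 1 + log⁺ (r ^ 2)⁻¹ ≤ 3 * ‖log r‖ := by
    have hsq : log (r ^ 2)⁻¹ = 2 * -log r := by rw [Real.log_inv, Real.log_pow]; push_cast; ring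
    rw [Real.posLog_apply, hsq, max_eq_right (by linarith), Real.norm_of_nonpos (by linarith)]
    linarith
  have hnonneg : 0 ≤ ∫ s in Ioi (0 : ℝ), heatKernel d 1 s * u (r ^ 2 * s) :=
    setIntegral_nonneg measurableSet_Ioi fun s (hs : 0 < s) =>
      mul_nonneg (heatKernel_pos d 1 hs).le (hu₀ _ (by positivity))
  rw [Real.norm_of_nonneg hnonneg]
  calc ∫ s in Ioi (0 : ℝ), heatKernel d 1 s * u (r ^ 2 * s)
      ≤ ∫ s in Ioi (0 : ℝ), C * (1 + log⁺ (r ^ 2)⁻¹) * (heatKernel d 1 s * (1 + s⁻¹)) :=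
        setIntegral_mono_on
          (integrableOn_heatKernel_mul_comp_mul hd hu₀ hu hC huC (pow_pos hr 2))
          ((integrableOn_heatKernel_mul_one_add_inv hd).const_mul _) measurableSet_Ioi
          fun s hs => heatKernel_mul_comp_mul_le d hC huC (pow_pos hr 2) hs
    _ = C * (1 + log⁺ (r ^ 2)⁻¹) * N := integral_const_mul _ _
    _ ≤ C * (3 * ‖log r‖) * N := by gcongr
    _ = C * 3 * N * ‖log r‖ := by ring

lemma integrableOn_heatKernel {d : ℝ} (hd : 2 < d) : IntegrableOn (heatKernel d 1) (Ioi 0) := by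
  refine (integrableOn_heatKernel_mul_one_add_inv hd).mono'
    (measurable_heatKernel d 1).aestronglyMeasurable
    (ae_restrict_of_forall_mem measurableSet_Ioi fun s (hs : 0 < s) => ?_)
  rw [Real.norm_of_nonneg (heatKernel_pos d 1 hs).le]
  exact le_mul_of_one_le_right (heatKernel_pos d 1 hs).le
    (le_add_of_nonneg_right (inv_nonneg.2 hs.le))

lemma setIntegral_Ioc_heatKernel_pos {d : ℝ} (hd : 2 < d) :
    0 < ∫ s in Ioc (0 : ℝ) 1, heatKernel d 1 s := by
  rw [← intervalIntegral.integral_of_le zero_le_one]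
  exact intervalIntegral.intervalIntegral_pos_of_pos_on
    ((intervalIntegrable_iff_integrableOn_Ioc_of_le zero_le_one).2
      ((integrableOn_heatKernel hd).mono_set Ioc_subset_Ioi_self))
    (fun s hs => heatKernel_pos d 1 hs.1) one_pos

lemma setIntegral_Ioc_heatKernel_mul_apply_le {d : ℝ} (hd : 2 < d) {u : ℝ → ℝ}
    (hu₀ : ∀ t, 0 < t → 0 ≤ u t) (hu : AntitoneOn u (Ioi 0)) {c : ℝ} (hc : 0 < c)
    (hint : IntegrableOn (fun s => heatKernel d 1 s * u (c * s)) (Ioi 0)) :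
    (∫ s in Ioc (0 : ℝ) 1, heatKernel d 1 s) * u c ≤
      ∫ s in Ioi (0 : ℝ), heatKernel d 1 s * u (c * s) := by
  calc (∫ s in Ioc (0 : ℝ) 1, heatKernel d 1 s) * u c
      = ∫ s in Ioc (0 : ℝ) 1, heatKernel d 1 s * u c := (integral_mul_const _ _).symm
    _ ≤ ∫ s in Ioc (0 : ℝ) 1, heatKernel d 1 s * u (c * s) := by
        refine setIntegral_mono_on
          (((integrableOn_heatKernel hd).mono_set Ioc_subset_Ioi_self).mul_const _)
          (hint.mono_set Ioc_subset_Ioi_self) measurableSet_Ioc fun s hs => ?_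
        exact mul_le_mul_of_nonneg_left
          (hu (mul_pos hc hs.1) hc (mul_le_of_le_one_right hc.le hs.2)) (heatKernel_pos d 1 hs.1).le
    _ ≤ ∫ s in Ioi (0 : ℝ), heatKernel d 1 s * u (c * s) := by
        refine setIntegral_mono_set hint ?_ Ioc_subset_Ioi_self.eventuallyLE
        exact ae_restrict_of_forall_mem measurableSet_Ioi fun s hs =>
          mul_nonneg (heatKernel_pos d 1 hs).le (hu₀ _ (mul_pos hc hs))

lemma log_isBigO_integral_heatKernel_mul_comp_sq_mul {d : ℝ} (hd : 2 < d) {u : ℝ → ℝ}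
    (hu₀ : ∀ t, 0 < t → 0 ≤ u t) (hu : AntitoneOn u (Ioi 0)) (hΘ : u =Θ[𝓝[>] 0] log) :
    log =O[𝓝[>] 0] fun r => ∫ s in Ioi (0 : ℝ), heatKernel d 1 s * u (r ^ 2 * s) := by
  obtain ⟨C, hC, huC⟩ := exists_forall_le_mul_one_add_posLog_inv hu hΘ.1
  have hsq : Tendsto (fun r : ℝ => r ^ 2) (𝓝[>] 0) (𝓝[>] 0) := by
    refine tendsto_nhdsWithin_iff.2
      ⟨((continuous_pow 2).tendsto' 0 0 (by simp)).mono_left nhdsWithin_le_nhds, ?_⟩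
    filter_upwards [self_mem_nhdsWithin] with r (hr : 0 < r) using pow_pos hr 2
  have hlog : log =O[𝓝[>] 0] fun r => u (r ^ 2) := by
    have hcomp := hΘ.2.comp_tendsto hsq
    simp only [Function.comp_def, Real.log_pow] at hcomp
    exact (isBigO_const_mul_left_iff (by norm_num)).1 hcomp
  refine hlog.trans (IsBigO.of_bound (∫ s in Ioc (0 : ℝ) 1, heatKernel d 1 s)⁻¹ ?_)
  filter_upwards [self_mem_nhdsWithin] with r (hr : 0 < r)
  have hint := integrableOn_heatKernel_mul_comp_mul hd hu₀ hu hC huC (pow_pos hr 2)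
  rw [Real.norm_of_nonneg (hu₀ _ (pow_pos hr 2)),
    le_inv_mul_iff₀ (setIntegral_Ioc_heatKernel_pos hd)]
  exact (setIntegral_Ioc_heatKernel_mul_apply_le hd hu₀ hu (pow_pos hr 2) hint).trans
    (Real.le_norm_self _)

theorem isTheta_greenProfile_of_isTheta_log {d : ℝ} (hd : 2 < d) {u : ℝ → ℝ}
    (hu₀ : ∀ t, 0 < t → 0 ≤ u t) (hu : AntitoneOn u (Ioi 0)) (hΘ : u =Θ[𝓝[>] 0] log) :
    greenProfile d u =Θ[𝓝[>] 0] fun r => r ^ (2 - d) * log r := by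
  have hscale : greenProfile d u =ᶠ[𝓝[>] 0]
      fun r => r ^ (2 - d) * ∫ s in Ioi (0 : ℝ), heatKernel d 1 s * u (r ^ 2 * s) := by
    filter_upwards [self_mem_nhdsWithin] with r hr using greenProfile_eq_rpow_mul d u hr
  exact hscale.trans_isTheta (isTheta_rfl.mul
    ⟨integral_heatKernel_mul_comp_sq_mul_isBigO_log hd hu₀ hu hΘ.1,
      log_isBigO_integral_heatKernel_mul_comp_sq_mul hd hu₀ hu hΘ⟩)

/-- If `u` is the potential density for the exponent `l / φ₁ l`, then `l * laplaceTransform u l` is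
`φ₁ l`, so the hypothesis says that the conjugate exponent `φ₁` grows like a logarithm. -/
theorem conjugate_geometric_stable_green_asymp_general {d : ℝ} (hd : 2 < d) {u : ℝ → ℝ}
    (hu₀ : ∀ t, 0 < t → 0 ≤ u t) (hu : AntitoneOn u (Ioi 0))
    (hL : (fun l => l * laplaceTransform u l) =Θ[atTop] log) :
    greenProfile d u =Θ[𝓝[>] 0] fun r => r ^ (2 - d) * log r :=
  isTheta_greenProfile_of_isTheta_log hd hu₀ hu (isTheta_log_of_isTheta_laplaceTransform hu₀ hu hL)

/-! ### The conjugate geometric stable exponent -/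

lemma isTheta_log_one_add_rpow {b : ℝ} (hb : 0 < b) :
    (fun x : ℝ => log (1 + x ^ b)) =Θ[atTop] log := by
  have hpow : Tendsto (fun x : ℝ => x ^ b) atTop atTop := tendsto_rpow_atTop hb
  have hequiv : (fun x : ℝ => 1 + x ^ b) ~[atTop] fun x => x ^ b :=
    IsEquivalent.refl.const_add_of_norm_tendsto_atTop (tendsto_norm_atTop_atTop.comp hpow)
  have hlog : (fun x : ℝ => log (x ^ b)) =ᶠ[atTop] fun x => b * log x := by
    filter_upwards [eventually_gt_atTop 0] with x hx using Real.log_rpow hx b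
  exact (hequiv.log hpow).isTheta.trans
    (hlog.trans_isTheta ((isTheta_const_mul_left hb.ne').2 isTheta_rfl))

lemma exists_bounds_of_isTheta_nhdsGT_zero {f h : ℝ → ℝ} (hfh : f =Θ[𝓝[>] 0] h)
    (hf : ∀ᶠ r in 𝓝[>] 0, 0 ≤ f r) (hh : ∀ᶠ r in 𝓝[>] 0, 0 ≤ h r) :
    ∃ c C r₀ : ℝ, 0 < c ∧ c ≤ C ∧ 0 < r₀ ∧
      ∀ r, 0 < r → r < r₀ → c * h r ≤ f r ∧ f r ≤ C * h r := by
  obtain ⟨a, ha, hlower⟩ := hfh.2.exists_pos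
  obtain ⟨b, -, hupper⟩ := hfh.1.exists_pos
  have hbounds : ∀ᶠ r in 𝓝[>] 0, a⁻¹ * h r ≤ f r ∧ f r ≤ max a⁻¹ b * h r := by
    filter_upwards [hlower.bound, hupper.bound, hf, hh] with r hlow hup hf hh
    rw [Real.norm_of_nonneg hf, Real.norm_of_nonneg hh] at hlow hup
    exact ⟨(inv_mul_le_iff₀ ha).2 hlow,
      hup.trans (mul_le_mul_of_nonneg_right (le_max_right _ _) hh)⟩
  obtain ⟨r₀, hr₀, hsub⟩ := mem_nhdsGT_iff_exists_Ioo_subset.1 hbounds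
  exact ⟨a⁻¹, max a⁻¹ b, r₀, inv_pos.2 ha, le_max_left _ _, hr₀, fun r hr hrr₀ => hsub ⟨hr, hrr₀⟩⟩

/-- For the subordinator with Laplace exponent `φ(λ) = λ/log(1+√λ)`, the Green function
profile of the corresponding subordinate Brownian motion satisfies
`g(r) ≍ r^{2-d} log(1/r)` as `r → 0+`. -/
theorem conjugate_geometric_stable_green_asymp
    (u : ℝ → ℝ)
    (hupos : ∀ t, 0 < t → 0 < u t)
    (hudec : ∀ s t, 0 < s → s ≤ t → u t ≤ u s)
    (hu : ∀ l, 0 < l → ∫ t in Ioi (0:ℝ), Real.exp (-(l * t)) * u t =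
      Real.log (1 + Real.sqrt l) / l)
    (d : ℕ) (hd : 3 ≤ d)
    (g : ℝ → ℝ)
    (hg : ∀ r, 0 < r → g r =
      ∫ t in Ioi (0:ℝ), (4 * Real.pi * t) ^ (-(d:ℝ) / 2) * Real.exp (-(r ^ 2 / (4 * t))) * u t) :
    ∃ c C r₀ : ℝ, 0 < c ∧ c ≤ C ∧ 0 < r₀ ∧ ∀ r, 0 < r → r < r₀ →
      c * (r ^ (2 - (d:ℝ)) * Real.log (1 / r)) ≤ g r ∧
      g r ≤ C * (r ^ (2 - (d:ℝ)) * Real.log (1 / r)) := by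
  have hd₂ : (2 : ℝ) < d := by exact_mod_cast hd
  have hL : (fun l => l * laplaceTransform u l) =Θ[atTop] log := by
    refine EventuallyEq.trans_isTheta ?_ (isTheta_log_one_add_rpow (one_half_pos (α := ℝ)))
    filter_upwards [eventually_gt_atTop 0] with l hl
    rw [laplaceTransform, hu l hl, mul_div_cancel₀ _ hl.ne', Real.sqrt_eq_rpow]
  have hgreen := conjugate_geometric_stable_green_asymp_general hd₂ (fun t ht => (hupos t ht).le)
    (fun s hs t _ hst => hudec s t hs hst) hL
  have hΘ : g =Θ[𝓝[>] 0] fun r => r ^ (2 - (d : ℝ)) * log (1 / r) := by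
    simp only [one_div, Real.log_inv, mul_neg]
    refine EventuallyEq.trans_isTheta ?_ (hgreen.trans (by simp [IsTheta, isBigO_refl]))
    filter_upwards [self_mem_nhdsWithin] with r hr using hg r hr
  refine exists_bounds_of_isTheta_nhdsGT_zero hΘ ?_ ?_
  · filter_upwards [self_mem_nhdsWithin] with r hr
    rw [hg r hr]
    exact setIntegral_nonneg measurableSet_Ioi fun t ht =>
      mul_nonneg (heatKernel_pos d r ht).le (hupos t ht).le
  · filter_upwards [Ioo_mem_nhdsGT one_pos] with r hr
    exact mul_nonneg (Real.rpow_nonneg hr.1.le _) (Real.log_nonneg (one_le_one_div hr.1 hr.2.le))
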